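/- Let λ > 0, n ≥ 1, δ ∈ (0,1), α ∈ [0,1], and let P be a fixed prior on H. Define the smoothed risk R^α(π_Q) = E_{x∼ν, a∼π0(·|x)}[π_Q(a|x)·c(x,a)/π0(a|x)^α]. Then with probability at least 1−δ over draws of D_n, the following holds simultaneously for all posteriors Q on H: |R^α(π_Q) − R̂_n^α(π_Q)| ≤ (D_KL(Q‖P)+log(2/δ))/(λn) + (λ/(2n))·Σ_{i=1}^n π_Q(a_i|x_i)c_i²/π0(a_i|x_i)^{2α} + (λ/2)·E_{x∼ν, a∼π0(·|x)}[π_Q(a|x)·c(x,a)²/π0(a|x)^{2α}]. -/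

import Mathlib

open MeasureTheory ProbabilityTheory Real

open Classical in
/-- Kullback–Leibler divergence between two measures, valued in `ℝ≥0∞` (junk value `⊤` when
`Q` is not absolutely continuous w.r.t. `P` or the log-likelihood ratio is not integrable). -/
noncomputable def klDiv {α : Type*} [MeasurableSpace α] (Q P : Measure α) : ENNReal :=
  if Q ≪ P ∧ Integrable (llr Q P) Q then ENNReal.ofReal (∫ x, llr Q P x ∂Q) else ⊤

/-!
Every jointly measurable family of exponents `g h ω` with `E exp (g h ·) ≤ 1` for each hypothesis
`h` satisfies, with probability at least `1 - ε`, the inequality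
`∫ g h ω dQ(h) ≤ KL(Q‖P) + log (1 / ε)` for all posteriors `Q` at once: the Donsker–Varadhan
inequality bounds the left side by `KL(Q‖P) + log ∫ exp (g h ω) dP(h)`, and Markov's inequality
controls the last integral, which does not depend on `Q`.

For a nonnegative loss `Z` the exponents `E Z - Z - E Z² / 2` and `Z - Z² / 2 - E Z` qualify,
because `exp (-x) ≤ 1 - x + x² / 2` and `exp (x - x² / 2) ≤ 1 + x` for `x ≥ 0`. The bound follows
by summing them over the sample, each at level `δ / 2`, for the loss
`Z h (x, a) = λ 1{h x = a} (-c x a) / π₀(a|x) ^ α`, whose first and second moments under `Q`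
are linear in `π_Q(a|x)`.
-/

section ExponentialInequalities

lemma exp_neg_le_one_sub_add_sq {x : ℝ} (hx : 0 ≤ x) : exp (-x) ≤ 1 - x + x ^ 2 / 2 := by
  have hpos : 0 < 1 - x + x ^ 2 / 2 := by nlinarith [sq_nonneg (x - 1)]
  rw [exp_neg, inv_le_comm₀ (exp_pos x) hpos]
  refine le_trans ?_ (quadratic_le_exp_of_nonneg hx)
  rw [inv_le_iff_one_le_mul₀ hpos]
  nlinarith [pow_nonneg hx 4]

lemma exp_sub_sq_le_one_add {x : ℝ} (hx : 0 ≤ x) : exp (x - x ^ 2 / 2) ≤ 1 + x := by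
  rw [← le_log_iff_exp_le (by linarith)]
  refine le_trans ?_ (le_log_one_add_of_nonneg hx)
  rw [le_div_iff₀ (by linarith)]
  nlinarith [pow_nonneg hx 3]

variable {S : Type*} [MeasurableSpace S] {μ : Measure S} [IsProbabilityMeasure μ]

lemma lintegral_exp_sub_integral_le_one {Y U : S → ℝ} (hU : Integrable U μ)
    (hYU : ∀ s, exp (Y s) ≤ 1 + U s) :
    ∫⁻ s, ENNReal.ofReal (exp (Y s - ∫ t, U t ∂μ)) ∂μ ≤ 1 := by
  have hU1 : Integrable (fun s => 1 + U s) μ := (integrable_const 1).add hU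
  calc ∫⁻ s, ENNReal.ofReal (exp (Y s - ∫ t, U t ∂μ)) ∂μ
      ≤ ∫⁻ s, ENNReal.ofReal ((1 + U s) / exp (∫ t, U t ∂μ)) ∂μ := by
        gcongr with s
        rw [exp_sub]
        gcongr
        exact hYU s
    _ = ENNReal.ofReal ((1 + ∫ t, U t ∂μ) / exp (∫ t, U t ∂μ)) := by
        rw [← ofReal_integral_eq_lintegral_ofReal (hU1.div_const _)
          (.of_forall fun s => div_nonneg ((exp_pos _).le.trans (hYU s)) (exp_pos _).le),
          integral_div, integral_add (integrable_const 1) hU]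
        simp
    _ ≤ 1 := by
        rw [ENNReal.ofReal_le_one, div_le_one (exp_pos _), add_comm]
        exact add_one_le_exp _

lemma lintegral_exp_lower_deviation_le_one {Z : S → ℝ} (hZ : Integrable Z μ)
    (hZ2 : Integrable (fun s => Z s ^ 2) μ) (hZ0 : ∀ s, 0 ≤ Z s) :
    ∫⁻ s, ENNReal.ofReal (exp (∫ t, Z t ∂μ - Z s - (∫ t, Z t ^ 2 ∂μ) / 2)) ∂μ ≤ 1 := by
  have hU : ∫ t, (Z t ^ 2 / 2 - Z t) ∂μ = (∫ t, Z t ^ 2 ∂μ) / 2 - ∫ t, Z t ∂μ := by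
    rw [integral_sub (hZ2.div_const 2) hZ, integral_div]
  have key := lintegral_exp_sub_integral_le_one (Y := fun s => -Z s) ((hZ2.div_const 2).sub hZ)
    fun s => (exp_neg_le_one_sub_add_sq (hZ0 s)).trans_eq (by simp only [Pi.sub_apply]; ring)
  simp only [Pi.sub_apply, hU] at key
  convert key using 5
  ring

lemma lintegral_exp_upper_deviation_le_one {Z : S → ℝ} (hZ : Integrable Z μ)
    (hZ0 : ∀ s, 0 ≤ Z s) :
    ∫⁻ s, ENNReal.ofReal (exp (Z s - Z s ^ 2 / 2 - ∫ t, Z t ∂μ)) ∂μ ≤ 1 :=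
  lintegral_exp_sub_integral_le_one hZ fun s => exp_sub_sq_le_one_add (hZ0 s)

lemma lintegral_pi_exp_sum_le_one {ι : Type*} [Fintype ι] {f : S → ℝ} (hf : Measurable f)
    (hf1 : ∫⁻ s, ENNReal.ofReal (exp (f s)) ∂μ ≤ 1) :
    ∫⁻ ω, ENNReal.ofReal (exp (∑ i, f (ω i))) ∂(Measure.pi fun _ : ι => μ) ≤ 1 := by
  have hφ : Measurable fun s => ENNReal.ofReal (exp (f s)) := hf.exp.ennreal_ofReal
  have hindep : iIndepFun (fun (i : ι) (ω : ι → S) => ENNReal.ofReal (exp (f (ω i))))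
      (Measure.pi fun _ : ι => μ) :=
    iIndepFun_pi (X := fun _ s => ENNReal.ofReal (exp (f s))) fun _ => hφ.aemeasurable
  calc ∫⁻ ω, ENNReal.ofReal (exp (∑ i, f (ω i))) ∂(Measure.pi fun _ : ι => μ)
      = ∫⁻ ω, ∏ i, ENNReal.ofReal (exp (f (ω i))) ∂(Measure.pi fun _ : ι => μ) := by
        simp only [exp_sum, ENNReal.ofReal_prod_of_nonneg fun _ _ => (exp_pos _).le]
    _ = ∏ i : ι, ∫⁻ ω, ENNReal.ofReal (exp (f (ω i))) ∂(Measure.pi fun _ : ι => μ) :=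
        lintegral_prod_eq_prod_lintegral_of_indepFun _ _ hindep
          fun i => hφ.comp (measurable_pi_apply i)
    _ = ∏ _i : ι, ∫⁻ s, ENNReal.ofReal (exp (f s)) ∂μ :=
        Finset.prod_congr rfl fun i _ =>
          (measurePreserving_eval (fun _ : ι => μ) i).lintegral_comp hφ
    _ ≤ 1 := Finset.prod_le_one' fun _ _ => hf1

end ExponentialInequalities

section AdmissiblePosterior

variable {H S ι : Type*} [MeasurableSpace H] [MeasurableSpace S]

/-- The posteriors `Q` to which the bounds for the loss `Z` apply, given a sample `ω` from `D`:
finite divergence from the prior, and a square integrable loss both under `Q ⊗ D` and, at each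
sample point, under `Q`. -/
structure IsAdmissiblePosterior (P : Measure H) (D : Measure S) (Z : H → S → ℝ) (ω : ι → S)
    (Q : Measure H) : Prop where
  isProbabilityMeasure : IsProbabilityMeasure Q
  klDiv_ne_top : InformationTheory.klDiv Q P ≠ ⊤
  memLp_prod : MemLp (Function.uncurry Z) 2 (Q.prod D)
  memLp_sample : ∀ i, MemLp (fun h => Z h (ω i)) 2 Q

namespace IsAdmissiblePosterior

variable {P Q : Measure H} {D : Measure S} {Z : H → S → ℝ} {ω : ι → S}

lemma integrable_sample (hQ : IsAdmissiblePosterior P D Z ω Q) (i : ι) :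
    Integrable (fun h => Z h (ω i)) Q :=
  have := hQ.isProbabilityMeasure
  (hQ.memLp_sample i).integrable one_le_two

variable [IsProbabilityMeasure D]

lemma integrable_prod (hQ : IsAdmissiblePosterior P D Z ω Q) :
    Integrable (Function.uncurry Z) (Q.prod D) :=
  have := hQ.isProbabilityMeasure
  hQ.memLp_prod.integrable one_le_two

lemma ae_memLp (hQ : IsAdmissiblePosterior P D Z ω Q) (hZ : Measurable (Function.uncurry Z)) :
    ∀ᵐ h ∂Q, MemLp (Z h) 2 D := by
  have := hQ.isProbabilityMeasure
  filter_upwards [hQ.memLp_prod.integrable_sq.prod_right_ae] with h hh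
  exact (memLp_two_iff_integrable_sq (hZ.comp measurable_prodMk_left).aestronglyMeasurable).mpr hh

lemma integral_lower_deviation (hQ : IsAdmissiblePosterior P D Z ω Q) (i : ι) :
    Integrable (fun h => ∫ t, Z h t ∂D - Z h (ω i) - (∫ t, Z h t ^ 2 ∂D) / 2) Q ∧
    ∫ h, (∫ t, Z h t ∂D - Z h (ω i) - (∫ t, Z h t ^ 2 ∂D) / 2) ∂Q
      = ∫ s, ∫ h, Z h s ∂Q ∂D - ∫ h, Z h (ω i) ∂Q - (∫ s, ∫ h, Z h s ^ 2 ∂Q ∂D) / 2 := by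
  have := hQ.isProbabilityMeasure
  have hmean : Integrable (fun h => ∫ t, Z h t ∂D) Q := hQ.integrable_prod.integral_prod_left
  have hdiff : Integrable (fun h => ∫ t, Z h t ∂D - Z h (ω i)) Q :=
    hmean.sub (hQ.integrable_sample i)
  have hsq : Integrable (fun h => (∫ t, Z h t ^ 2 ∂D) / 2) Q :=
    hQ.memLp_prod.integrable_sq.integral_prod_left.div_const 2
  refine ⟨hdiff.sub hsq, ?_⟩
  rw [integral_sub hdiff hsq, integral_sub hmean (hQ.integrable_sample i), integral_div,
    integral_integral_swap hQ.integrable_prod,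
    integral_integral_swap (f := fun h s => Z h s ^ 2) hQ.memLp_prod.integrable_sq]

lemma integral_upper_deviation (hQ : IsAdmissiblePosterior P D Z ω Q) (i : ι) :
    Integrable (fun h => Z h (ω i) - Z h (ω i) ^ 2 / 2 - ∫ t, Z h t ∂D) Q ∧
    ∫ h, (Z h (ω i) - Z h (ω i) ^ 2 / 2 - ∫ t, Z h t ∂D) ∂Q
      = ∫ h, Z h (ω i) ∂Q - (∫ h, Z h (ω i) ^ 2 ∂Q) / 2 - ∫ s, ∫ h, Z h s ∂Q ∂D := by
  have := hQ.isProbabilityMeasure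
  have hmean : Integrable (fun h => ∫ t, Z h t ∂D) Q := hQ.integrable_prod.integral_prod_left
  have hsq : Integrable (fun h => Z h (ω i) ^ 2 / 2) Q :=
    (hQ.memLp_sample i).integrable_sq.div_const 2
  have hdiff : Integrable (fun h => Z h (ω i) - Z h (ω i) ^ 2 / 2) Q :=
    (hQ.integrable_sample i).sub hsq
  refine ⟨hdiff.sub hmean, ?_⟩
  rw [integral_sub hdiff hmean, integral_sub (hQ.integrable_sample i) hsq, integral_div,
    integral_integral_swap hQ.integrable_prod]

end IsAdmissiblePosterior

end AdmissiblePosterior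

section PACBayes

variable {H : Type*} [MeasurableSpace H]

lemma klDiv_eq_informationTheory_klDiv (Q P : Measure H) [IsProbabilityMeasure Q]
    [IsProbabilityMeasure P] : klDiv Q P = InformationTheory.klDiv Q P := by
  simp [klDiv, InformationTheory.klDiv]

/- Donsker–Varadhan: this is Gibbs' inequality for `Q` and the tilted prior `P.tilted g`. -/
lemma integral_le_toReal_klDiv_add_log_integral_exp {Q P : Measure H} [IsProbabilityMeasure Q]
    [IsProbabilityMeasure P] (hKL : InformationTheory.klDiv Q P ≠ ⊤) {g : H → ℝ}
    (hgQ : Integrable g Q) (hgP : Integrable (fun h => exp (g h)) P) :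
    ∫ h, g h ∂Q ≤ (InformationTheory.klDiv Q P).toReal + log (∫ h, exp (g h) ∂P) := by
  obtain ⟨hQP, hllr⟩ := InformationTheory.klDiv_ne_top_iff.mp hKL
  have := isProbabilityMeasure_tilted hgP
  have gibbs := InformationTheory.integral_llr_add_sub_measure_univ_nonneg
    (hQP.trans (absolutelyContinuous_tilted hgP)) (integrable_llr_tilted_right hQP hgQ hllr hgP)
  rw [integral_llr_tilted_right hQP hgQ hgP hllr, probReal_univ, probReal_univ] at gibbs
  rw [InformationTheory.toReal_klDiv_of_measure_eq hQP (by simp)]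
  linarith

variable {Ω : Type*} [MeasurableSpace Ω] {μ : Measure Ω} [IsProbabilityMeasure μ]
  {P : Measure H} [IsProbabilityMeasure P]

/- The events below are quantified over all posteriors and need not be measurable; bounding the
outer measure of their complements is what makes a union bound available. -/
lemma measure_compl_forall_posterior_le {g : H → Ω → ℝ} (hg : Measurable (Function.uncurry g))
    (hg1 : ∀ h, ∫⁻ ω, ENNReal.ofReal (exp (g h ω)) ∂μ ≤ 1) {ε : ℝ} (hε : 0 < ε) :
    μ {ω | ∀ Q : Measure H, IsProbabilityMeasure Q → InformationTheory.klDiv Q P ≠ ⊤ →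
      Integrable (fun h => g h ω) Q →
      ∫ h, g h ω ∂Q ≤ (InformationTheory.klDiv Q P).toReal + log (1 / ε)}ᶜ
      ≤ ENNReal.ofReal ε := by
  let W : Ω → ENNReal := fun ω => ∫⁻ h, ENNReal.ofReal (exp (g h ω)) ∂P
  have hexp : Measurable fun q : Ω × H => ENNReal.ofReal (exp (g q.2 q.1)) :=
    (hg.comp measurable_swap).exp.ennreal_ofReal
  have hW : ∫⁻ ω, W ω ∂μ ≤ 1 := by
    rw [lintegral_lintegral_swap hexp.aemeasurable]
    exact (lintegral_mono hg1).trans_eq (by simp)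
  have markov : μ {ω | ENNReal.ofReal (1 / ε) ≤ W ω} ≤ ENNReal.ofReal ε :=
    calc μ {ω | ENNReal.ofReal (1 / ε) ≤ W ω}
        ≤ (∫⁻ ω, W ω ∂μ) / ENNReal.ofReal (1 / ε) :=
          meas_ge_le_lintegral_div hexp.lintegral_prod_right'.aemeasurable
            (by simpa using hε) ENNReal.ofReal_ne_top
      _ ≤ 1 / ENNReal.ofReal (1 / ε) := by gcongr
      _ = ENNReal.ofReal ε := by
          rw [one_div, one_div, ENNReal.ofReal_inv_of_pos hε, inv_inv]
  refine (measure_mono (Set.compl_subset_comm.mp ?_)).trans markov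
  intro ω hω Q hQ hKL hgQ
  have hWω : W ω < ENNReal.ofReal (1 / ε) := not_le.mp hω
  have hgP : Integrable (fun h => exp (g h ω)) P :=
    (lintegral_ofReal_ne_top_iff_integrable
      (hg.comp measurable_prodMk_right).exp.aestronglyMeasurable
      (.of_forall fun _ => (exp_pos _).le)).mp hWω.ne_top
  have hIntegral : ∫ h, exp (g h ω) ∂P ≤ 1 / ε := by
    rw [← ENNReal.ofReal_le_ofReal_iff (by positivity),
      ofReal_integral_eq_lintegral_ofReal hgP (.of_forall fun _ => (exp_pos _).le)]
    exact hWω.le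
  have := integral_exp_pos hgP
  grw [integral_le_toReal_klDiv_add_log_integral_exp hKL hgQ hgP, hIntegral]

open Classical in
lemma measure_compl_forall_posterior_le_of_ae {g : H → Ω → ℝ}
    (hg : Measurable (Function.uncurry g)) {ε : ℝ} (hε : 0 < ε) :
    μ {ω | ∀ Q : Measure H, IsProbabilityMeasure Q → InformationTheory.klDiv Q P ≠ ⊤ →
      (∀ᵐ h ∂Q, ∫⁻ ω', ENNReal.ofReal (exp (g h ω')) ∂μ ≤ 1) → Integrable (fun h => g h ω) Q →
      ∫ h, g h ω ∂Q ≤ (InformationTheory.klDiv Q P).toReal + log (1 / ε)}ᶜ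
      ≤ ENNReal.ofReal ε := by
  let T : Set H := {h | ∫⁻ ω, ENNReal.ofReal (exp (g h ω)) ∂μ ≤ 1}
  have hT : MeasurableSet T :=
    measurableSet_le hg.exp.ennreal_ofReal.lintegral_prod_right' measurable_const
  -- Off `T` the exponent is replaced by `0`, whose exponential has mean `1`.
  let g' : H → Ω → ℝ := fun h ω => if h ∈ T then g h ω else 0
  have hg' : Measurable (Function.uncurry g') :=
    Measurable.ite (measurable_fst hT) hg measurable_const
  have hg'1 : ∀ h, ∫⁻ ω, ENNReal.ofReal (exp (g' h ω)) ∂μ ≤ 1 := by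
    intro h
    by_cases hh : h ∈ T
    · simpa only [g', if_pos hh] using! hh
    · simp [g', if_neg hh]
  refine (measure_mono (Set.compl_subset_compl.mpr fun ω hω Q hQ hKL hQT hgQ => ?_)).trans
    (measure_compl_forall_posterior_le (P := P) hg' hg'1 hε)
  have hgg' : (fun h => g h ω) =ᵐ[Q] fun h => g' h ω := by
    filter_upwards [hQT] with h hh
    exact (if_pos hh).symm
  rw [integral_congr_ae hgg']
  exact hω Q hQ hKL (hgQ.congr hgg')

variable {S : Type*} [MeasurableSpace S] {D : Measure S} [IsProbabilityMeasure D]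
  {ι : Type*} [Fintype ι]

lemma measure_pi_compl_forall_posterior_sum_le {f : H → S → ℝ}
    (hf : Measurable (Function.uncurry f)) {ε : ℝ} (hε : 0 < ε) :
    (Measure.pi fun _ : ι => D)
      {ω | ∀ Q : Measure H, IsProbabilityMeasure Q → InformationTheory.klDiv Q P ≠ ⊤ →
        (∀ᵐ h ∂Q, ∫⁻ s, ENNReal.ofReal (exp (f h s)) ∂D ≤ 1) →
        (∀ i, Integrable (fun h => f h (ω i)) Q) →
        ∑ i, ∫ h, f h (ω i) ∂Q ≤ (InformationTheory.klDiv Q P).toReal + log (1 / ε)}ᶜ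
      ≤ ENNReal.ofReal ε := by
  have hsum : Measurable (Function.uncurry fun (h : H) (ω : ι → S) => ∑ i, f h (ω i)) :=
    Finset.measurable_fun_sum _ fun i _ =>
      hf.comp (measurable_fst.prodMk ((measurable_pi_apply i).comp measurable_snd))
  refine (measure_mono (Set.compl_subset_compl.mpr fun ω hω Q hQ hKL hQ1 hfQ => ?_)).trans
    (measure_compl_forall_posterior_le_of_ae (P := P) hsum hε)
  rw [← integral_finsetSum _ fun i _ => hfQ i]
  refine hω Q hQ hKL ?_ (integrable_finsetSum _ fun i _ => hfQ i)
  filter_upwards [hQ1] with h hh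
  exact lintegral_pi_exp_sum_le_one (hf.comp measurable_prodMk_left) hh

variable {Z : H → S → ℝ}

lemma measure_pi_compl_lower_deviation_le (hZ : Measurable (Function.uncurry Z))
    (hZ0 : ∀ h s, 0 ≤ Z h s) {ε : ℝ} (hε : 0 < ε) :
    (Measure.pi fun _ : ι => D) {ω | ∀ Q, IsAdmissiblePosterior P D Z ω Q →
        Fintype.card ι * ∫ s, ∫ h, Z h s ∂Q ∂D - ∑ i, ∫ h, Z h (ω i) ∂Q
          ≤ (InformationTheory.klDiv Q P).toReal + log (1 / ε)
            + Fintype.card ι * (∫ s, ∫ h, Z h s ^ 2 ∂Q ∂D) / 2}ᶜ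
      ≤ ENNReal.ofReal ε := by
  let f : H → S → ℝ := fun h s => ∫ t, Z h t ∂D - Z h s - (∫ t, Z h t ^ 2 ∂D) / 2
  have hmean : Measurable fun h => ∫ t, Z h t ∂D :=
    hZ.stronglyMeasurable.integral_prod_right.measurable
  have hsq : Measurable fun h => ∫ t, Z h t ^ 2 ∂D :=
    (hZ.pow_const 2).stronglyMeasurable.integral_prod_right'.measurable
  have hf : Measurable (Function.uncurry f) :=
    ((hmean.comp measurable_fst).sub hZ).sub ((hsq.comp measurable_fst).div_const 2)
  refine (measure_mono (Set.compl_subset_compl.mpr fun ω hω Q hQ => ?_)).trans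
    (measure_pi_compl_forall_posterior_sum_le (P := P) hf hε)
  have hfQ : ∀ᵐ h ∂Q, ∫⁻ s, ENNReal.ofReal (exp (f h s)) ∂D ≤ 1 := by
    filter_upwards [hQ.ae_memLp hZ] with h hh
    exact lintegral_exp_lower_deviation_le_one (hh.integrable one_le_two) hh.integrable_sq (hZ0 h)
  have key := hω Q hQ.isProbabilityMeasure hQ.klDiv_ne_top hfQ
    fun i => (hQ.integral_lower_deviation i).1
  simp only [f, (hQ.integral_lower_deviation _).2, Finset.sum_sub_distrib,
    Finset.sum_const, Finset.card_univ, nsmul_eq_mul] at key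
  linarith

lemma measure_pi_compl_upper_deviation_le (hZ : Measurable (Function.uncurry Z))
    (hZ0 : ∀ h s, 0 ≤ Z h s) {ε : ℝ} (hε : 0 < ε) :
    (Measure.pi fun _ : ι => D) {ω | ∀ Q, IsAdmissiblePosterior P D Z ω Q →
        ∑ i, ∫ h, Z h (ω i) ∂Q - Fintype.card ι * ∫ s, ∫ h, Z h s ∂Q ∂D
          ≤ (InformationTheory.klDiv Q P).toReal + log (1 / ε)
            + (∑ i, ∫ h, Z h (ω i) ^ 2 ∂Q) / 2}ᶜ
      ≤ ENNReal.ofReal ε := by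
  let f : H → S → ℝ := fun h s => Z h s - Z h s ^ 2 / 2 - ∫ t, Z h t ∂D
  have hmean : Measurable fun h => ∫ t, Z h t ∂D :=
    hZ.stronglyMeasurable.integral_prod_right.measurable
  have hf : Measurable (Function.uncurry f) :=
    (hZ.sub ((hZ.pow_const 2).div_const 2)).sub (hmean.comp measurable_fst)
  refine (measure_mono (Set.compl_subset_compl.mpr fun ω hω Q hQ => ?_)).trans
    (measure_pi_compl_forall_posterior_sum_le (P := P) hf hε)
  have hfQ : ∀ᵐ h ∂Q, ∫⁻ s, ENNReal.ofReal (exp (f h s)) ∂D ≤ 1 := by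
    filter_upwards [hQ.ae_memLp hZ] with h hh
    exact lintegral_exp_upper_deviation_le_one (hh.integrable one_le_two) (hZ0 h)
  have key := hω Q hQ.isProbabilityMeasure hQ.klDiv_ne_top hfQ
    fun i => (hQ.integral_upper_deviation i).1
  simp only [f, (hQ.integral_upper_deviation _).2, Finset.sum_sub_distrib, ← Finset.sum_div,
    Finset.sum_const, Finset.card_univ, nsmul_eq_mul] at key
  linarith

lemma ofReal_one_sub_le_measure_of_compl_le {A B : Set Ω} {δ : ℝ} (hδ : 0 ≤ δ)
    (hA : μ Aᶜ ≤ ENNReal.ofReal (δ / 2)) (hB : μ Bᶜ ≤ ENNReal.ofReal (δ / 2)) :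
    ENNReal.ofReal (1 - δ) ≤ μ (A ∩ B) := by
  have hcompl : μ (A ∩ B)ᶜ ≤ ENNReal.ofReal δ :=
    calc μ (A ∩ B)ᶜ = μ (Aᶜ ∪ Bᶜ) := by rw [Set.compl_inter]
      _ ≤ ENNReal.ofReal (δ / 2) + ENNReal.ofReal (δ / 2) :=
        (measure_union_le _ _).trans (add_le_add hA hB)
      _ = ENNReal.ofReal δ := by
        rw [← ENNReal.ofReal_add (by positivity) (by positivity), add_halves]
  rw [ENNReal.ofReal_sub _ hδ, ENNReal.ofReal_one, tsub_le_iff_right, ← measure_univ (μ := μ)]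
  grw [measure_univ_le_add_compl (A ∩ B), hcompl]

theorem pac_bayes_of_nonneg (hZ : Measurable (Function.uncurry Z)) (hZ0 : ∀ h s, 0 ≤ Z h s)
    {δ : ℝ} (hδ : 0 < δ) :
    ENNReal.ofReal (1 - δ) ≤ (Measure.pi fun _ : ι => D)
      {ω | ∀ Q, IsAdmissiblePosterior P D Z ω Q →
        |Fintype.card ι * ∫ s, ∫ h, Z h s ∂Q ∂D - ∑ i, ∫ h, Z h (ω i) ∂Q|
          ≤ (InformationTheory.klDiv Q P).toReal + log (2 / δ)
            + (∑ i, ∫ h, Z h (ω i) ^ 2 ∂Q) / 2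
            + Fintype.card ι * (∫ s, ∫ h, Z h s ^ 2 ∂Q ∂D) / 2} := by
  refine (ofReal_one_sub_le_measure_of_compl_le hδ.le
    (measure_pi_compl_lower_deviation_le (P := P) hZ hZ0 (half_pos hδ))
    (measure_pi_compl_upper_deviation_le (P := P) hZ hZ0 (half_pos hδ))).trans
    (measure_mono fun ω ⟨hlower, hupper⟩ Q hQ => ?_)
  have lower := hlower Q hQ
  have upper := hupper Q hQ
  rw [one_div_div] at lower upper
  have hsample : 0 ≤ ∑ i, ∫ h, Z h (ω i) ^ 2 ∂Q :=
    Finset.sum_nonneg fun i _ => integral_nonneg fun h => sq_nonneg _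
  have hmean : 0 ≤ Fintype.card ι * ∫ s, ∫ h, Z h s ^ 2 ∂Q ∂D :=
    mul_nonneg (Nat.cast_nonneg _) (integral_nonneg fun s => integral_nonneg fun h => sq_nonneg _)
  rw [abs_le]
  constructor <;> linarith

end PACBayes

section InducedPolicy

variable {H X A : Type*}

/-- The policy `π_Q(a|x)` induced by a posterior `Q`: the law of the action `ev h x` when `h` is
drawn from `Q`. -/
noncomputable def inducedPolicy [MeasurableSpace H] (ev : H → X → A) (Q : Measure H) (x : X)
    (a : A) : ℝ :=
  (Q {h | ev h x = a}).toReal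

/-- The loss of a hypothesis on a logged pair `(x, a)`: `w x a` if it chooses the logged action,
and `0` otherwise. Its mean under a posterior `Q` is `π_Q(a|x) * w x a`. -/
noncomputable def actionLoss (ev : H → X → A) (w : X → A → ℝ) (h : H) : X × A → ℝ :=
  {s | ev h s.1 = s.2}.indicator (Function.uncurry w)

variable {ev : H → X → A} {w : X → A → ℝ}

lemma actionLoss_nonneg (hw : ∀ x a, 0 ≤ w x a) (h : H) (s : X × A) : 0 ≤ actionLoss ev w h s :=
  Set.indicator_nonneg (fun s _ => hw s.1 s.2) s

lemma actionLoss_sq (h : H) (s : X × A) :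
    actionLoss ev w h s ^ 2 = actionLoss ev (fun x a => w x a ^ 2) h s := by
  by_cases hs : ev h s.1 = s.2 <;> simp [actionLoss, Set.indicator, hs, Function.uncurry]

variable [MeasurableSpace H]

lemma inducedPolicy_nonneg (Q : Measure H) (x : X) (a : A) : 0 ≤ inducedPolicy ev Q x a :=
  ENNReal.toReal_nonneg

variable [MeasurableSpace X] [MeasurableSpace A] [MeasurableEq A]

lemma measurable_actionLoss (hev : Measurable (Function.uncurry ev))
    (hw : Measurable (Function.uncurry w)) : Measurable (Function.uncurry (actionLoss ev w)) :=
  (hw.comp measurable_snd).indicator <|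
    measurableSet_eq_fun (hev.comp (measurable_fst.prodMk measurable_snd.fst)) measurable_snd.snd

lemma integral_actionLoss (hev : Measurable (Function.uncurry ev)) (Q : Measure H) (s : X × A) :
    ∫ h, actionLoss ev w h s ∂Q = inducedPolicy ev Q s.1 s.2 * w s.1 s.2 :=
  integral_indicator_const (w s.1 s.2)
    (hev.comp measurable_prodMk_right (measurableSet_singleton s.2))

variable {Q : Measure H} [IsProbabilityMeasure Q]

lemma measurable_inducedPolicy_mul (hev : Measurable (Function.uncurry ev))
    (hw : Measurable (Function.uncurry w)) :
    Measurable fun s : X × A => inducedPolicy ev Q s.1 s.2 * w s.1 s.2 := by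
  simp only [← integral_actionLoss hev]
  exact (measurable_actionLoss hev hw).stronglyMeasurable.integral_prod_left'.measurable

lemma memLp_actionLoss (hev : Measurable (Function.uncurry ev))
    (hw : Measurable (Function.uncurry w)) (s : X × A) :
    MemLp (fun h => actionLoss ev w h s) 2 Q :=
  .of_bound ((measurable_actionLoss hev hw).comp measurable_prodMk_right).aestronglyMeasurable
    ‖w s.1 s.2‖ (.of_forall fun _ => norm_indicator_le_norm_self _ _)

variable {D : Measure (X × A)} [IsProbabilityMeasure D]

lemma memLp_prod_actionLoss (hev : Measurable (Function.uncurry ev))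
    (hw : Measurable (Function.uncurry w))
    (hint : Integrable (fun s => inducedPolicy ev Q s.1 s.2 * w s.1 s.2 ^ 2) D) :
    MemLp (Function.uncurry (actionLoss ev w)) 2 (Q.prod D) := by
  have hZ := measurable_actionLoss hev hw
  rw [memLp_two_iff_integrable_sq hZ.aestronglyMeasurable,
    integrable_prod_iff' (hZ.pow_const 2).aestronglyMeasurable]
  refine ⟨.of_forall fun s => (memLp_actionLoss hev hw s).integrable_sq, ?_⟩
  simp only [norm_pow, norm_eq_abs, sq_abs]
  simpa only [Function.uncurry, actionLoss_sq, integral_actionLoss hev] using hint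

lemma integrable_inducedPolicy_mul (hev : Measurable (Function.uncurry ev))
    (hw : Measurable (Function.uncurry w))
    (hint : Integrable (fun s => inducedPolicy ev Q s.1 s.2 * w s.1 s.2 ^ 2) D) :
    Integrable (fun s => inducedPolicy ev Q s.1 s.2 * w s.1 s.2) D := by
  simpa only [Function.uncurry, integral_actionLoss hev] using
    ((memLp_prod_actionLoss hev hw hint).integrable one_le_two).integral_prod_right

lemma isAdmissiblePosterior_actionLoss {P : Measure H} {ι : Type*} (ω : ι → X × A)
    (hev : Measurable (Function.uncurry ev)) (hw : Measurable (Function.uncurry w))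
    (hKL : InformationTheory.klDiv Q P ≠ ⊤)
    (hint : Integrable (fun s => inducedPolicy ev Q s.1 s.2 * w s.1 s.2 ^ 2) D) :
    IsAdmissiblePosterior P D (actionLoss ev w) ω Q :=
  ⟨‹_›, hKL, memLp_prod_actionLoss hev hw hint, fun i => memLp_actionLoss hev hw (ω i)⟩

theorem pac_bayes_inducedPolicy (P : Measure H) [IsProbabilityMeasure P]
    (hev : Measurable (Function.uncurry ev)) (hw : Measurable (Function.uncurry w))
    (hw0 : ∀ x a, 0 ≤ w x a) {lam : ℝ} (hlam : 0 < lam) {n : ℕ} (hn : 1 ≤ n) {δ : ℝ}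
    (hδ : 0 < δ) :
    ENNReal.ofReal (1 - δ) ≤ (Measure.pi fun _ : Fin n => D)
      {ω | ∀ Q : Measure H, IsProbabilityMeasure Q → InformationTheory.klDiv Q P ≠ ⊤ →
        Integrable (fun s => inducedPolicy ev Q s.1 s.2 * w s.1 s.2 ^ 2) D →
        |∫ s, inducedPolicy ev Q s.1 s.2 * w s.1 s.2 ∂D
            - (n : ℝ)⁻¹ * ∑ i, inducedPolicy ev Q (ω i).1 (ω i).2 * w (ω i).1 (ω i).2|
          ≤ ((InformationTheory.klDiv Q P).toReal + log (2 / δ)) / (lam * n)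
            + lam / (2 * n) * ∑ i, inducedPolicy ev Q (ω i).1 (ω i).2 * w (ω i).1 (ω i).2 ^ 2
            + lam / 2 * ∫ s, inducedPolicy ev Q s.1 s.2 * w s.1 s.2 ^ 2 ∂D} := by
  have hlw : Measurable (Function.uncurry fun x a => lam * w x a) := hw.const_mul lam
  refine (pac_bayes_of_nonneg (P := P) (measurable_actionLoss hev hlw)
    (actionLoss_nonneg fun x a => mul_nonneg hlam.le (hw0 x a)) hδ).trans
    (measure_mono fun ω hω Q hQ hKL hint => ?_)
  have hlint : Integrable (fun s => inducedPolicy ev Q s.1 s.2 * (lam * w s.1 s.2) ^ 2) D := by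
    simpa only [mul_pow, mul_left_comm _ (lam ^ 2)] using hint.const_mul (lam ^ 2)
  have key := hω Q (isAdmissiblePosterior_actionLoss ω hev hlw hKL hlint)
  simp only [actionLoss_sq, integral_actionLoss hev, mul_pow, mul_left_comm _ lam,
    mul_left_comm _ (lam ^ 2), integral_const_mul, ← Finset.mul_sum, Fintype.card_fin] at key
  have hn0 : (0 : ℝ) < n := by exact_mod_cast hn
  have hscale : 0 < lam * n := mul_pos hlam hn0
  rw [← mul_le_mul_iff_right₀ hscale, ← abs_of_pos hscale, ← abs_mul, abs_of_pos hscale]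
  calc |lam * n * (∫ s, inducedPolicy ev Q s.1 s.2 * w s.1 s.2 ∂D
          - (n : ℝ)⁻¹ * ∑ i, inducedPolicy ev Q (ω i).1 (ω i).2 * w (ω i).1 (ω i).2)|
      = _ := by
        congr 1
        field_simp
    _ ≤ _ := key
    _ = _ := by field_simp

end InducedPolicy

section FiniteActions

variable {X A : Type*} [MeasurableSpace X] [Fintype A] [MeasurableSpace A]
  [MeasurableSingletonClass A] {ν : Measure X} [SFinite ν] {κ : Kernel X A} [IsFiniteKernel κ]
  {f : X × A → ℝ}

lemma integral_compProd_eq_integral_sum (hf : Integrable f (ν ⊗ₘ κ)) :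
    ∫ s, f s ∂(ν ⊗ₘ κ) = ∫ x, ∑ a, (κ x).real {a} * f (x, a) ∂ν := by
  simp only [Measure.integral_compProd hf, integral_fintype .of_finite, smul_eq_mul]

lemma integrable_compProd_of_integrable_sum (hf : Measurable f) (hf0 : ∀ s, 0 ≤ f s)
    (hint : Integrable (fun x => ∑ a, (κ x).real {a} * f (x, a)) ν) :
    Integrable f (ν ⊗ₘ κ) := by
  rw [Measure.integrable_compProd_iff hf.aestronglyMeasurable]
  refine ⟨.of_forall fun x => .of_finite, ?_⟩
  simpa only [integral_fintype .of_finite, smul_eq_mul, norm_of_nonneg (hf0 _)] using hint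

end FiniteActions

theorem pac_bayes_inducedPolicy_compProd {X A H : Type*} [MeasurableSpace X] [Fintype A]
    [MeasurableSpace A] [MeasurableSingletonClass A] [MeasurableSpace H] {ν : Measure X}
    [IsProbabilityMeasure ν] {κ : Kernel X A} [IsMarkovKernel κ] {ev : H → X → A}
    {w : X → A → ℝ} (P : Measure H) [IsProbabilityMeasure P]
    (hev : Measurable (Function.uncurry ev)) (hw : ∀ a, Measurable fun x => w x a)
    (hw0 : ∀ x a, 0 ≤ w x a) {lam : ℝ} (hlam : 0 < lam) {n : ℕ} (hn : 1 ≤ n) {δ : ℝ}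
    (hδ : 0 < δ) :
    ENNReal.ofReal (1 - δ) ≤ (Measure.pi fun _ : Fin n => ν ⊗ₘ κ)
      {ω | ∀ Q : Measure H, IsProbabilityMeasure Q → InformationTheory.klDiv Q P ≠ ⊤ →
        Integrable (fun x => ∑ a, (κ x).real {a} * (inducedPolicy ev Q x a * w x a ^ 2)) ν →
        |∫ x, ∑ a, (κ x).real {a} * (inducedPolicy ev Q x a * w x a) ∂ν
            - (n : ℝ)⁻¹ * ∑ i, inducedPolicy ev Q (ω i).1 (ω i).2 * w (ω i).1 (ω i).2|
          ≤ ((InformationTheory.klDiv Q P).toReal + log (2 / δ)) / (lam * n)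
            + lam / (2 * n) * ∑ i, inducedPolicy ev Q (ω i).1 (ω i).2 * w (ω i).1 (ω i).2 ^ 2
            + lam / 2 *
              ∫ x, ∑ a, (κ x).real {a} * (inducedPolicy ev Q x a * w x a ^ 2) ∂ν} := by
  have hwm : Measurable (Function.uncurry w) := measurable_from_prod_countable_left hw
  refine (pac_bayes_inducedPolicy P hev hwm hw0 hlam hn hδ).trans
    (measure_mono fun ω hω Q hQ hKL hint => ?_)
  have hsq : Integrable (fun s => inducedPolicy ev Q s.1 s.2 * w s.1 s.2 ^ 2) (ν ⊗ₘ κ) :=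
    integrable_compProd_of_integrable_sum
      (measurable_inducedPolicy_mul (w := fun x a => w x a ^ 2) hev (hwm.pow_const 2))
      (fun s => mul_nonneg (inducedPolicy_nonneg Q _ _) (sq_nonneg _)) hint
  have key := hω Q hQ hKL hsq
  rwa [integral_compProd_eq_integral_sum (integrable_inducedPolicy_mul hev hwm hsq),
    integral_compProd_eq_integral_sum hsq] at key

theorem pac_bayes_smoothed_risk_general
    {X : Type*} [MeasurableSpace X]
    {A : Type*} [Fintype A] [MeasurableSpace A] [MeasurableSingletonClass A]
    {H : Type*} [MeasurableSpace H]
    (ν : Measure X) [IsProbabilityMeasure ν]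
    (p0 c : X → A → ℝ)
    (hcmeas : ∀ a, Measurable fun x => c x a)
    (hp0pos : ∀ x a, 0 < p0 x a)
    (hc : ∀ x a, c x a ≤ 0)
    (ev : H → X → A)
    (hev : Measurable fun q : H × X => ev q.1 q.2)
    (κ0 : Kernel X A) [IsMarkovKernel κ0]
    (hκ0 : ∀ x a, κ0 x {a} = ENNReal.ofReal (p0 x a))
    (P : Measure H) [IsProbabilityMeasure P]
    (lam : ℝ) (hlam : 0 < lam) (n : ℕ) (hn : 1 ≤ n) (δ : ℝ) (hδ : 0 < δ) (α : ℝ) :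
    ENNReal.ofReal (1 - δ) ≤
      (Measure.pi fun _ : Fin n => ν ⊗ₘ κ0)
        {ω | ∀ Q : Measure H, IsProbabilityMeasure Q → klDiv Q P ≠ ⊤ →
          Integrable (fun x => ∑ a, p0 x a *
              (inducedPolicy ev Q x a * c x a ^ 2 / p0 x a ^ (2 * α))) ν →
          |(∫ x, ∑ a, p0 x a * (inducedPolicy ev Q x a * c x a / p0 x a ^ α) ∂ν)
              - (n : ℝ)⁻¹ * ∑ i, c (ω i).1 (ω i).2 * inducedPolicy ev Q (ω i).1 (ω i).2
                  / p0 (ω i).1 (ω i).2 ^ α|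
            ≤ ((klDiv Q P).toReal + log (2 / δ)) / (lam * n)
              + lam / (2 * n) * ∑ i, inducedPolicy ev Q (ω i).1 (ω i).2
                  * c (ω i).1 (ω i).2 ^ 2 / p0 (ω i).1 (ω i).2 ^ (2 * α)
              + lam / 2 * ∫ x, ∑ a, p0 x a *
                  (inducedPolicy ev Q x a * c x a ^ 2 / p0 x a ^ (2 * α)) ∂ν} := by
  have hreal : ∀ x a, (κ0 x).real {a} = p0 x a := fun x a => by
    rw [measureReal_def, hκ0, ENNReal.toReal_ofReal (hp0pos x a).le]
  have hp0meas : ∀ a, Measurable fun x => p0 x a := fun a => by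
    simpa only [← hreal] using! (κ0.measurable_coe (measurableSet_singleton a)).ennreal_toReal
  let w : X → A → ℝ := fun x a => -c x a / p0 x a ^ α
  have hw : ∀ a, Measurable fun x => w x a := fun a =>
    (hcmeas a).neg.div ((hp0meas a).pow_const α)
  have hw0 : ∀ x a, 0 ≤ w x a := fun x a =>
    div_nonneg (neg_nonneg.mpr (hc x a)) (rpow_nonneg (hp0pos x a).le α)
  have hπw : ∀ Q x a, inducedPolicy ev Q x a * w x a
      = -(inducedPolicy ev Q x a * c x a / p0 x a ^ α) := fun Q x a => by
    simp only [w]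
    ring
  have hπw_sq : ∀ Q x a, inducedPolicy ev Q x a * w x a ^ 2
      = inducedPolicy ev Q x a * c x a ^ 2 / p0 x a ^ (2 * α) := fun Q x a => by
    rw [div_pow, neg_sq, mul_comm 2 α, rpow_mul (hp0pos x a).le, rpow_two, mul_div_assoc]
  refine (pac_bayes_inducedPolicy_compProd P hev hw hw0 hlam hn hδ).trans
    (measure_mono fun ω hω Q hQ hKL hint => ?_)
  rw [klDiv_eq_informationTheory_klDiv] at hKL ⊢
  have key := hω Q hQ hKL (by simpa only [hreal, hπw_sq] using hint)
  simp only [hreal, hπw, hπw_sq, mul_neg, Finset.sum_neg_distrib, integral_neg,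
    neg_sub_neg] at key
  rw [abs_sub_comm]
  simpa only [mul_comm (c _ _)] using key

/-- **PAC-Bayes bound for the smoothed risk (Proposition 2).**  With probability at least
`1 − δ` over the logged data, simultaneously for all posteriors `Q` on `H` (with finite KL
divergence to the prior `P`, and such that the theoretical second-moment term is integrable),
the gap between the smoothed risk `R^α(π_Q)` and its empirical counterpart `R̂ₙ^α(π_Q)` is
controlled by the KL divergence and empirical plus theoretical second moments. -/
theorem pac_bayes_smoothed_risk
    {X : Type*} [MeasurableSpace X] {K : ℕ}
    {H : Type*} [MeasurableSpace H]
    (ν : Measure X) [IsProbabilityMeasure ν]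
    (p0 c : X → Fin K → ℝ)
    (hp0meas : ∀ a, Measurable fun x => p0 x a)
    (hcmeas : ∀ a, Measurable fun x => c x a)
    (hp0pos : ∀ x a, 0 < p0 x a) (hp0sum : ∀ x, ∑ a, p0 x a = 1)
    (hc : ∀ x a, c x a ∈ Set.Icc (-1 : ℝ) 0)
    (ev : H → X → Fin K)
    (hev : Measurable fun q : H × X => ev q.1 q.2)
    (κ0 : Kernel X (Fin K)) [IsMarkovKernel κ0]
    (hκ0 : ∀ x a, κ0 x {a} = ENNReal.ofReal (p0 x a))
    (P : Measure H) [IsProbabilityMeasure P]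
    (lam : ℝ) (hlam : 0 < lam) (n : ℕ) (hn : 1 ≤ n)
    (δ : ℝ) (hδ : δ ∈ Set.Ioo (0 : ℝ) 1) (α : ℝ) (hα : α ∈ Set.Icc (0 : ℝ) 1) :
    ENNReal.ofReal (1 - δ) ≤
      (Measure.pi fun _ : Fin n => ν ⊗ₘ κ0)
        {ω | ∀ Q : Measure H, IsProbabilityMeasure Q → klDiv Q P ≠ ⊤ →
          Integrable (fun x => ∑ a, p0 x a *
              ((Q {h | ev h x = a}).toReal * c x a ^ 2 / p0 x a ^ (2 * α))) ν →
          |(∫ x, ∑ a, p0 x a * ((Q {h | ev h x = a}).toReal * c x a / p0 x a ^ α) ∂ν)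
              - (n : ℝ)⁻¹ * ∑ i, c (ω i).1 (ω i).2 * (Q {h | ev h (ω i).1 = (ω i).2}).toReal
                  / p0 (ω i).1 (ω i).2 ^ α|
            ≤ ((klDiv Q P).toReal + Real.log (2 / δ)) / (lam * n)
              + lam / (2 * n) * ∑ i, (Q {h | ev h (ω i).1 = (ω i).2}).toReal
                  * c (ω i).1 (ω i).2 ^ 2 / p0 (ω i).1 (ω i).2 ^ (2 * α)
              + lam / 2 * ∫ x, ∑ a, p0 x a *
                  ((Q {h | ev h x = a}).toReal * c x a ^ 2 / p0 x a ^ (2 * α)) ∂ν} :=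
  pac_bayes_smoothed_risk_general ν p0 c hcmeas hp0pos (fun x a => (hc x a).2) ev hev κ0 hκ0 P
    lam hlam n hn δ hδ.1 α
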